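/- Let φ solve the wave equation -□φ = F on ℝ^{1+2} (□ = -∂_t² + Δ). Then for all t > 0 and |x| ≤ 3t, Σ |∂∂φ(t,x)| ≤ C ( (1/⟨t-|x|⟩) Σ_Γ |∂Γφ(t,x)| + (1/⟨t-|x|⟩) |∂φ(t,x)| + (t/⟨t-|x|⟩) |F(t,x)| ), where Γ ranges over the vector fields {∂_α, Ω, L₁, L₂}, ∂∂ ranges over second derivatives, and ⟨s⟩ = sqrt(1+s²). -/

import Mathlib

/-- Partial derivative in `t` of a function `u(t, x₁, x₂)`. -/
noncomputable def pdt (u : ℝ → ℝ → ℝ → ℝ) : ℝ → ℝ → ℝ → ℝ :=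
  fun t x y => deriv (fun s => u s x y) t

/-- Partial derivative in `x₁`. -/
noncomputable def pd1 (u : ℝ → ℝ → ℝ → ℝ) : ℝ → ℝ → ℝ → ℝ :=
  fun t x y => deriv (fun s => u t s y) x

/-- Partial derivative in `x₂`. -/
noncomputable def pd2 (u : ℝ → ℝ → ℝ → ℝ) : ℝ → ℝ → ℝ → ℝ :=
  fun t x y => deriv (fun s => u t x s) y

/-- Lorentz boost `L₁ = x₁ ∂_t + t ∂_{x₁}`. -/
noncomputable def Lb1 (u : ℝ → ℝ → ℝ → ℝ) : ℝ → ℝ → ℝ → ℝ :=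
  fun t x y => x * pdt u t x y + t * pd1 u t x y

/-- Lorentz boost `L₂ = x₂ ∂_t + t ∂_{x₂}`. -/
noncomputable def Lb2 (u : ℝ → ℝ → ℝ → ℝ) : ℝ → ℝ → ℝ → ℝ :=
  fun t x y => y * pdt u t x y + t * pd2 u t x y

/-- Rotation `Ω = x₁ ∂_{x₂} - x₂ ∂_{x₁}`. -/
noncomputable def rotOp (u : ℝ → ℝ → ℝ → ℝ) : ℝ → ℝ → ℝ → ℝ :=
  fun t x y => x * pd2 u t x y - y * pd1 u t x y

/-- Japanese bracket `⟨s⟩ = sqrt(1+s²)`. -/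
noncomputable def jap (s : ℝ) : ℝ := Real.sqrt (1 + s ^ 2)

/-- Sum of absolute values of the three first partial derivatives of `u` at a point. -/
noncomputable def sum1 (u : ℝ → ℝ → ℝ → ℝ) (t x y : ℝ) : ℝ :=
  |pdt u t x y| + |pd1 u t x y| + |pd2 u t x y|

def Smo (u : ℝ → ℝ → ℝ → ℝ) : Prop :=
  ContDiff ℝ (⊤ : ℕ∞) (fun p : ℝ × ℝ × ℝ => u p.1 p.2.1 p.2.2)

theorem Smo.fd {u : ℝ → ℝ → ℝ → ℝ} (h : Smo u) (p : ℝ × ℝ × ℝ) :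
    HasFDerivAt (fun p : ℝ × ℝ × ℝ => u p.1 p.2.1 p.2.2)
      (fderiv ℝ (fun p : ℝ × ℝ × ℝ => u p.1 p.2.1 p.2.2) p) p :=
  (ContDiff.differentiable h (by simp) p).hasFDerivAt

theorem Smo.ht' {u : ℝ → ℝ → ℝ → ℝ} (h : Smo u) (t x y : ℝ) :
    HasDerivAt (fun s => u s x y)
      (fderiv ℝ (fun p : ℝ × ℝ × ℝ => u p.1 p.2.1 p.2.2) (t, x, y) (1, 0, 0)) t := by
  have h1 : HasDerivAt (fun s : ℝ => ((s, x, y) : ℝ × ℝ × ℝ)) (1, 0, 0) t :=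
    (hasDerivAt_id t).prodMk ((hasDerivAt_const t x).prodMk (hasDerivAt_const t y))
  exact (h.fd (t, x, y)).comp_hasDerivAt t h1

theorem Smo.h1' {u : ℝ → ℝ → ℝ → ℝ} (h : Smo u) (t x y : ℝ) :
    HasDerivAt (fun s => u t s y)
      (fderiv ℝ (fun p : ℝ × ℝ × ℝ => u p.1 p.2.1 p.2.2) (t, x, y) (0, 1, 0)) x := by
  have h1 : HasDerivAt (fun s : ℝ => ((t, s, y) : ℝ × ℝ × ℝ)) (0, 1, 0) x :=
    (hasDerivAt_const x t).prodMk ((hasDerivAt_id x).prodMk (hasDerivAt_const x y))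
  exact (h.fd (t, x, y)).comp_hasDerivAt x h1

theorem Smo.h2' {u : ℝ → ℝ → ℝ → ℝ} (h : Smo u) (t x y : ℝ) :
    HasDerivAt (fun s => u t x s)
      (fderiv ℝ (fun p : ℝ × ℝ × ℝ => u p.1 p.2.1 p.2.2) (t, x, y) (0, 0, 1)) y := by
  have h1 : HasDerivAt (fun s : ℝ => ((t, x, s) : ℝ × ℝ × ℝ)) (0, 0, 1) y :=
    (hasDerivAt_const y t).prodMk ((hasDerivAt_const y x).prodMk (hasDerivAt_id y))
  exact (h.fd (t, x, y)).comp_hasDerivAt y h1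

theorem Smo.ht {u : ℝ → ℝ → ℝ → ℝ} (h : Smo u) (t x y : ℝ) :
    HasDerivAt (fun s => u s x y) (pdt u t x y) t :=
  (h.ht' t x y).differentiableAt.hasDerivAt

theorem Smo.h1 {u : ℝ → ℝ → ℝ → ℝ} (h : Smo u) (t x y : ℝ) :
    HasDerivAt (fun s => u t s y) (pd1 u t x y) x :=
  (h.h1' t x y).differentiableAt.hasDerivAt

theorem Smo.h2 {u : ℝ → ℝ → ℝ → ℝ} (h : Smo u) (t x y : ℝ) :
    HasDerivAt (fun s => u t x s) (pd2 u t x y) y :=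
  (h.h2' t x y).differentiableAt.hasDerivAt

theorem Smo.fsm {u : ℝ → ℝ → ℝ → ℝ} (h : Smo u) :
    ContDiff ℝ (⊤ : ℕ∞) (fderiv ℝ (fun p : ℝ × ℝ × ℝ => u p.1 p.2.1 p.2.2)) :=
  ContDiff.fderiv_right (n := (⊤ : ℕ∞)) h (by simp)

theorem Smo.et {u : ℝ → ℝ → ℝ → ℝ} (h : Smo u) (t x y : ℝ) : pdt u t x y =
    fderiv ℝ (fun p : ℝ × ℝ × ℝ => u p.1 p.2.1 p.2.2) (t, x, y) (1, 0, 0) := (h.ht' t x y).deriv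
theorem Smo.e1 {u : ℝ → ℝ → ℝ → ℝ} (h : Smo u) (t x y : ℝ) : pd1 u t x y =
    fderiv ℝ (fun p : ℝ × ℝ × ℝ => u p.1 p.2.1 p.2.2) (t, x, y) (0, 1, 0) := (h.h1' t x y).deriv
theorem Smo.e2 {u : ℝ → ℝ → ℝ → ℝ} (h : Smo u) (t x y : ℝ) : pd2 u t x y =
    fderiv ℝ (fun p : ℝ × ℝ × ℝ => u p.1 p.2.1 p.2.2) (t, x, y) (0, 0, 1) := (h.h2' t x y).deriv

theorem Smo.st {u : ℝ → ℝ → ℝ → ℝ} (h : Smo u) : Smo (pdt u) := by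
  unfold Smo
  simp only [h.et]
  exact h.fsm.clm_apply contDiff_const
theorem Smo.s1 {u : ℝ → ℝ → ℝ → ℝ} (h : Smo u) : Smo (pd1 u) := by
  unfold Smo
  simp only [h.e1]
  exact h.fsm.clm_apply contDiff_const
theorem Smo.s2 {u : ℝ → ℝ → ℝ → ℝ} (h : Smo u) : Smo (pd2 u) := by
  unfold Smo
  simp only [h.e2]
  exact h.fsm.clm_apply contDiff_const

theorem Smo.ffd {u : ℝ → ℝ → ℝ → ℝ} (h : Smo u) (p v w : ℝ × ℝ × ℝ) :
    fderiv ℝ (fun q => fderiv ℝ (fun p : ℝ × ℝ × ℝ => u p.1 p.2.1 p.2.2) q v) p w =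
    fderiv ℝ (fun q => fderiv ℝ (fun p : ℝ × ℝ × ℝ => u p.1 p.2.1 p.2.2) q w) p v := by
  have hd : DifferentiableAt ℝ (fderiv ℝ (fun p : ℝ × ℝ × ℝ => u p.1 p.2.1 p.2.2)) p :=
    h.fsm.differentiable (by simp) p
  have hs : IsSymmSndFDerivAt ℝ (fun p : ℝ × ℝ × ℝ => u p.1 p.2.1 p.2.2) p :=
    (ContDiff.contDiffAt h).isSymmSndFDerivAt (by
      simp only [minSmoothness_of_isRCLikeNormedField]; exact WithTop.coe_le_coe.2 (le_top : (2 : ℕ∞) ≤ ⊤))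
  rw [fderiv_clm_apply hd (by fun_prop), fderiv_clm_apply hd (by fun_prop)]
  simpa using hs w v

theorem Smo.c1t {u : ℝ → ℝ → ℝ → ℝ} (h : Smo u) (t x y : ℝ) :
    pd1 (pdt u) t x y = pdt (pd1 u) t x y := by
  rw [h.st.e1, h.s1.et]; simp only [h.et, h.e1]; exact h.ffd _ _ _
theorem Smo.c2t {u : ℝ → ℝ → ℝ → ℝ} (h : Smo u) (t x y : ℝ) :
    pd2 (pdt u) t x y = pdt (pd2 u) t x y := by
  rw [h.st.e2, h.s2.et]; simp only [h.et, h.e2]; exact h.ffd _ _ _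
theorem Smo.c21 {u : ℝ → ℝ → ℝ → ℝ} (h : Smo u) (t x y : ℝ) :
    pd2 (pd1 u) t x y = pd1 (pd2 u) t x y := by
  rw [h.s1.e2, h.s2.e1]; simp only [h.e1, h.e2]; exact h.ffd _ _ _

theorem abs_le_of_scaled {s t x P Q A K k : ℝ} (ht : 0 < t) (hs : |s| ≤ 2 * t) (hx : |x| ≤ 3 * t)
    (h : x * P + t * Q = A) (hA : |A| ≤ K) (hP : |s| * |P| ≤ k) :
    |s| * |Q| ≤ 2 * K + 3 * k := by
  have e : t * Q = A - x * P := by linarith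
  have h1 : t * |Q| ≤ |A| + |x| * |P| := by
    have h0 : t * |Q| = |t * Q| := by rw [abs_mul, abs_of_pos ht]
    rw [h0, ← abs_mul, e]; exact abs_sub _ _
  have h2 : |s| * (t * |Q|) ≤ |s| * (|A| + |x| * |P|) :=
    mul_le_mul_of_nonneg_left h1 (abs_nonneg _)
  have h3 : |s| * |A| ≤ 2 * t * K := mul_le_mul hs hA (abs_nonneg _) (by linarith)
  have h4 : |x| * (|s| * |P|) ≤ 3 * t * k := mul_le_mul hx hP (by positivity) (by linarith)
  have : t * (|s| * |Q|) ≤ t * (2 * K + 3 * k) := by nlinarith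
  exact le_of_mul_le_mul_left this ht

theorem tt_bound {t x y r a b c d f F A1 A2 B1 B2 K : ℝ} (ht : 0 < t) (hr0 : 0 ≤ r)
    (hr : r ^ 2 = x ^ 2 + y ^ 2)
    (hx : |x| ≤ 3 * t) (hy : |y| ≤ 3 * t) (hw : a - d - f = F)
    (e1 : x * a + t * b = A1) (e2 : y * a + t * c = A2) (e3 : x * b + t * d = B1)
    (e4 : y * c + t * f = B2) (h1 : |A1| ≤ K) (h2 : |A2| ≤ K) (h3 : |B1| ≤ K) (h4 : |B2| ≤ K)
    (hF : t * |F| ≤ K) : |t - r| * |a| ≤ 9 * K := by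
  have key : (t + r) * ((t - r) * a) = t * (t * F) + t * B1 + t * B2 - x * A1 - y * A2 := by
    subst hw e1 e2 e3 e4
    linear_combination (-a) * hr
  have hK : 0 ≤ K := (abs_nonneg _).trans h1
  have m1 : |x * A1| ≤ 3 * t * K := by
    rw [abs_mul]; exact mul_le_mul hx h1 (abs_nonneg _) (by linarith)
  have m2 : |y * A2| ≤ 3 * t * K := by
    rw [abs_mul]; exact mul_le_mul hy h2 (abs_nonneg _) (by linarith)
  have m3 : |t * B1| ≤ t * K := by
    rw [abs_mul, abs_of_pos ht]; exact mul_le_mul_of_nonneg_left h3 ht.le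
  have m4 : |t * B2| ≤ t * K := by
    rw [abs_mul, abs_of_pos ht]; exact mul_le_mul_of_nonneg_left h4 ht.le
  have m5 : |t * (t * F)| ≤ t * K := by
    rw [abs_mul, abs_mul, abs_of_pos ht]; exact mul_le_mul_of_nonneg_left hF ht.le
  have tot : |(t + r) * ((t - r) * a)| ≤ t * (9 * K) := by
    rw [key]
    rw [abs_le] at *
    constructor <;> linarith [m1.1, m1.2, m2.1, m2.2, m3.1, m3.2, m4.1, m4.2, m5.1, m5.2]
  rw [abs_mul, abs_mul, abs_of_pos (by linarith : 0 < t + r)] at tot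
  have : t * (|t - r| * |a|) ≤ t * (9 * K) := by
    have : 0 ≤ r * (|t - r| * |a|) := by positivity
    nlinarith
  exact le_of_mul_le_mul_left this ht

/-- Wave equation pointwise estimate: if `-□φ = F` on ℝ^{1+2}, then for `t > 0`, `|x| ≤ 3t`,
`Σ|∂∂φ| ≤ C ( ⟨t-|x|⟩⁻¹ Σ_Γ |∂Γφ| + ⟨t-|x|⟩⁻¹ |∂φ| + (t/⟨t-|x|⟩) |F| )`
with `Γ ∈ {∂_t, ∂₁, ∂₂, Ω, L₁, L₂}`. -/
theorem stmt10 :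
    ∃ C : ℝ, 0 < C ∧
      ∀ (φ F : ℝ → ℝ → ℝ → ℝ),
        ContDiff ℝ (⊤ : ℕ∞) (fun p : ℝ × ℝ × ℝ => φ p.1 p.2.1 p.2.2) →
        (∀ t x y : ℝ,
          pdt (pdt φ) t x y - pd1 (pd1 φ) t x y - pd2 (pd2 φ) t x y = F t x y) →
        ∀ t x y : ℝ, 0 < t → Real.sqrt (x ^ 2 + y ^ 2) ≤ 3 * t →
          sum1 (pdt φ) t x y + sum1 (pd1 φ) t x y + sum1 (pd2 φ) t x y ≤ C *
            ((1 / jap (t - Real.sqrt (x ^ 2 + y ^ 2))) *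
                (sum1 (pdt φ) t x y + sum1 (pd1 φ) t x y + sum1 (pd2 φ) t x y
                  + sum1 (rotOp φ) t x y + sum1 (Lb1 φ) t x y + sum1 (Lb2 φ) t x y)
              + (1 / jap (t - Real.sqrt (x ^ 2 + y ^ 2))) * sum1 φ t x y
              + (t / jap (t - Real.sqrt (x ^ 2 + y ^ 2))) * |F t x y|) := by
  refine ⟨1000, by norm_num, ?_⟩
  intro φ F hφ hw t x y ht hr3
  have h : Smo φ := hφ
  have hw := hw t x y
  have L1t : pdt (Lb1 φ) t x y = x * pdt (pdt φ) t x y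
      + (1 * pd1 φ t x y + t * pdt (pd1 φ) t x y) :=
    (((h.st.ht t x y).const_mul x).add ((hasDerivAt_id t).mul (h.s1.ht t x y))).deriv
  have L11 : pd1 (Lb1 φ) t x y = (1 * pdt φ t x y + x * pd1 (pdt φ) t x y)
      + t * pd1 (pd1 φ) t x y :=
    (((hasDerivAt_id x).mul (h.st.h1 t x y)).add ((h.s1.h1 t x y).const_mul t)).deriv
  have L12 : pd2 (Lb1 φ) t x y = x * pd2 (pdt φ) t x y + t * pd2 (pd1 φ) t x y :=
    (((h.st.h2 t x y).const_mul x).add ((h.s1.h2 t x y).const_mul t)).deriv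
  have L2t : pdt (Lb2 φ) t x y = y * pdt (pdt φ) t x y
      + (1 * pd2 φ t x y + t * pdt (pd2 φ) t x y) :=
    (((h.st.ht t x y).const_mul y).add ((hasDerivAt_id t).mul (h.s2.ht t x y))).deriv
  have L22 : pd2 (Lb2 φ) t x y = (1 * pdt φ t x y + y * pd2 (pdt φ) t x y)
      + t * pd2 (pd2 φ) t x y :=
    (((hasDerivAt_id y).mul (h.st.h2 t x y)).add ((h.s2.h2 t x y).const_mul t)).deriv
  rw [h.c1t] at L11
  rw [h.c2t, h.c21] at L12
  rw [h.c2t] at L22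
  have hR0 : 0 ≤ sum1 (rotOp φ) t x y := by unfold sum1; positivity
  simp only [sum1] at hR0 ⊢
  rw [h.c1t, h.c2t, h.c21]
  generalize |pdt (rotOp φ) t x y| + |pd1 (rotOp φ) t x y| + |pd2 (rotOp φ) t x y| = R at *
  generalize pdt (Lb1 φ) t x y = l1t at *
  generalize pd1 (Lb1 φ) t x y = l11 at *
  generalize pd2 (Lb1 φ) t x y = l12 at *
  generalize pdt (Lb2 φ) t x y = l2t at *
  generalize pd1 (Lb2 φ) t x y = l21 at *
  generalize pd2 (Lb2 φ) t x y = l22 at *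
  generalize pdt (pdt φ) t x y = a at *
  generalize pdt (pd1 φ) t x y = b at *
  generalize pdt (pd2 φ) t x y = c at *
  generalize pd1 (pd1 φ) t x y = d at *
  generalize pd1 (pd2 φ) t x y = e at *
  generalize pd2 (pd2 φ) t x y = f at *
  generalize pdt φ t x y = ut at *
  generalize pd1 φ t x y = u1 at *
  generalize pd2 φ t x y = u2 at *
  generalize F t x y = G at *
  have hr2 : Real.sqrt (x ^ 2 + y ^ 2) ^ 2 = x ^ 2 + y ^ 2 := Real.sq_sqrt (by positivity)
  have hr0 := Real.sqrt_nonneg (x ^ 2 + y ^ 2)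
  generalize Real.sqrt (x ^ 2 + y ^ 2) = r at *
  have hx : |x| ≤ 3 * t := (abs_le_of_sq_le_sq (by nlinarith [sq_nonneg y]) hr0).trans hr3
  have hy : |y| ≤ 3 * t := (abs_le_of_sq_le_sq (by nlinarith [sq_nonneg x]) hr0).trans hr3
  have hs : |t - r| ≤ 2 * t := by rw [abs_le]; constructor <;> linarith
  have hj0 : 0 < jap (t - r) := by unfold jap; positivity
  have hj : jap (t - r) ≤ 1 + |t - r| := by
    unfold jap
    apply Real.sqrt_le_iff.2
    constructor
    · positivity
    · nlinarith [abs_nonneg (t - r), sq_abs (t - r)]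
  generalize jap (t - r) = j at *
  obtain ⟨S, hS⟩ : ∃ S, S = |a| + |b| + |c| + (|b| + |d| + |e|) + (|c| + |e| + |f|) := ⟨_, rfl⟩
  obtain ⟨K, hK⟩ : ∃ K, K = (S + R + (|l1t| + |l11| + |l12|) + (|l2t| + |l21| + |l22|))
    + (|ut| + |u1| + |u2|) + t * |G| := ⟨_, rfl⟩
  have hS0 : 0 ≤ S := by rw [hS]; positivity
  have hG0 : 0 ≤ t * |G| := by positivity
  have b1 := abs_nonneg l1t
  have b2 := abs_nonneg l11
  have b3 := abs_nonneg l12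
  have b4 := abs_nonneg l2t
  have b5 := abs_nonneg l21
  have b6 := abs_nonneg l22
  have b7 := abs_nonneg ut
  have b8 := abs_nonneg u1
  have b9 := abs_nonneg u2
  have A1 : |l1t - u1| ≤ K := (abs_sub _ _).trans (by linarith)
  have A2 : |l2t - u2| ≤ K := (abs_sub _ _).trans (by linarith)
  have B1 : |l11 - ut| ≤ K := (abs_sub _ _).trans (by linarith)
  have B2 : |l22 - ut| ≤ K := (abs_sub _ _).trans (by linarith)
  have B3 : |l12| ≤ K := by linarith
  have GK : t * |G| ≤ K := by linarith
  have ea : x * a + t * b = l1t - u1 := by linarith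
  have ec : y * a + t * c = l2t - u2 := by linarith
  have ed : x * b + t * d = l11 - ut := by linarith
  have ef : y * c + t * f = l22 - ut := by linarith
  have ee : x * c + t * e = l12 := by linarith
  have ka := tt_bound ht hr0 hr2 hx hy hw ea ec ed ef A1 A2 B1 B2 GK
  have kb := abs_le_of_scaled ht hs hx ea A1 ka
  have kc := abs_le_of_scaled ht hs hy ec A2 ka
  have kd := abs_le_of_scaled ht hs hx ed B1 kb
  have kf := abs_le_of_scaled ht hs hy ef B2 kc
  have ke := abs_le_of_scaled ht hs hx ee B3 kc
  have hjS : j * S ≤ 1000 * K := by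
    have h1 : j * S ≤ (1 + |t - r|) * S := mul_le_mul_of_nonneg_right hj hS0
    have h2 : |t - r| * S = |t - r| * |a| + |t - r| * |b| + |t - r| * |c|
      + (|t - r| * |b| + |t - r| * |d| + |t - r| * |e|)
      + (|t - r| * |c| + |t - r| * |e| + |t - r| * |f|) := by rw [hS]; ring
    linarith
  rw [← hS]
  have : 1000 * K / j = 1000 * (1 / j * (S + R + (|l1t| + |l11| + |l12|) + (|l2t| + |l21| + |l22|))
    + 1 / j * (|ut| + |u1| + |u2|) + t / j * |G|) := by rw [hK]; ring
  have h5 : S ≤ 1000 * K / j := by rw [le_div_iff₀ hj0]; linarith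
  rw [this] at h5
  convert h5 using 1
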